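/- The inclusion of F_{√(1+x²)} into the real elements of F_{√x} is strict: there exists a real number (for example √(1+√2)) which belongs to F_{√x} but does not belong to F_{√(1+x²)}. -/

import Mathlib

/-!
The totally real numbers form a subfield of `ℂ`, and it contains every square root of a sum of two
squares of its elements: each conjugate of such a root has a nonnegative real square. Hence every
element of `F_{√(1+x²)}` is totally real. But `z = √(1+√2)` is not: conjugating `z² - 1 = √2` to
`-√2` sends `z` to some `z'` with `z'² = 1 - √2`, and then `(z z')² = 1 - 2 < 0`, so `z` and `z'`
are not both real.
-/

open Polynomial

/-- A complex number is *totally real* if it is algebraic over ℚ and every complex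
root of its minimal polynomial over ℚ is a real number. -/
def IsTotallyReal (α : ℂ) : Prop :=
  IsAlgebraic ℚ α ∧ ∀ z : ℂ, aeval z (minpoly ℚ α) = 0 → z.im = 0

/-- Membership in `F_{√(1+x²)}`, the smallest subfield of ℝ closed under
`x ↦ √(1+x²)`. -/
def MemFSqrtOneAddSq (α : ℝ) : Prop :=
  ∀ K : Subfield ℝ, (∀ x ∈ K, Real.sqrt (1 + x ^ 2) ∈ K) → α ∈ K

/-- Membership in `F_{√x}`, the smallest subfield of ℂ closed under taking
square roots. -/
def MemFSqrt (α : ℂ) : Prop :=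
  ∀ L : Subfield ℂ, (∀ z : ℂ, z ^ 2 ∈ L → z ∈ L) → α ∈ L

section ConjugateRoots

variable {F K : Type*} [Field F] [Field K] [Algebra F K]

theorem isConjRoot_neg_of_sq_eq_algebraMap {b : F} (hb : ¬IsSquare b) {w : K}
    (hw : w ^ 2 = algebraMap F K b) : IsConjRoot F w (-w) := by
  have hirr : Irreducible (X ^ 2 - C b) :=
    X_pow_sub_C_irreducible_of_prime Nat.prime_two fun c hc => hb ⟨c, by rw [← hc, sq]⟩
  have hmonic : (X ^ 2 - C b).Monic := monic_X_pow_sub_C b two_ne_zero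
  rw [isConjRoot_def, ← minpoly.eq_of_irreducible_of_monic hirr (by simp [hw]) hmonic,
    ← minpoly.eq_of_irreducible_of_monic hirr (by simp [hw]) hmonic]

variable [IsAlgClosed K]

theorem aeval_minpoly_coe_eq_zero_iff {a : algebraicClosure F K} {z : K} :
    aeval z (minpoly F (a : K)) = 0 ↔ ∃ φ : algebraicClosure F K →ₐ[F] K, φ a = z := by
  have hne : minpoly F a ≠ 0 := minpoly.ne_zero (Algebra.IsIntegral.isIntegral a)
  rw [← IntermediateField.minpoly_eq, ← mem_rootSet_of_ne hne,
    ← Algebra.IsAlgebraic.range_eval_eq_rootSet_minpoly K a, Set.mem_range]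

theorem exists_isConjRoot_aeval_eq (p : F[X]) {z w : K} (hz : IsAlgebraic F z)
    (h : IsConjRoot F (aeval z p) w) : ∃ z', IsConjRoot F z z' ∧ aeval z' p = w := by
  let E := algebraicClosure F K
  have : Normal F E := IsAlgClosure.normal F E
  let a : E := ⟨z, hz.isIntegral⟩
  have haw : IsConjRoot F (E.val (aeval a p)) w := by rwa [← aeval_algHom_apply]
  let b : E := ⟨w, haw.isIntegral (aeval a p).2⟩
  have hab : IsConjRoot F (aeval a p) b := (isConjRoot_algHom_iff E.val).mp haw
  obtain ⟨σ, hσ⟩ := hab.symm.exists_algEquiv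
  refine ⟨σ a, (isConjRoot_algHom_iff E.val).mpr (isConjRoot_of_algEquiv a σ), ?_⟩
  calc aeval (E.val (σ a)) p = E.val (σ (aeval a p)) := by
        rw [aeval_algHom_apply, aeval_algHom_apply]
    _ = w := by rw [hσ]; rfl

end ConjugateRoots

section TotallyReal

open NumberField (maximalRealSubfield mem_maximalRealSubfield_iff)

theorem mem_maximalRealSubfield_of_sq_eq_add_sq {K : Type*} [Field K] {x y z : K}
    (hx : x ∈ maximalRealSubfield K) (hy : y ∈ maximalRealSubfield K) (h : z ^ 2 = x ^ 2 + y ^ 2) :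
    z ∈ maximalRealSubfield K := by
  intro φ
  obtain ⟨s, hs⟩ := Complex.conj_eq_iff_real.mp (hx φ)
  obtain ⟨t, ht⟩ := Complex.conj_eq_iff_real.mp (hy φ)
  have hφz : φ z ^ 2 = (√(s ^ 2 + t ^ 2) : ℂ) ^ 2 := by
    rw [← map_pow, h, map_add, map_pow, map_pow, hs, ht]
    exact_mod_cast (Real.sq_sqrt (by positivity)).symm
  rcases sq_eq_sq_iff_eq_or_eq_neg.mp hφz with hz | hz <;> simp [hz]

namespace IsTotallyReal

theorem of_isConjRoot {z w : ℂ} (hz : IsTotallyReal z) (h : IsConjRoot ℚ z w) :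
    IsTotallyReal w :=
  ⟨(h.isIntegral hz.1.isIntegral).isAlgebraic, fun x hx => hz.2 x (h ▸ hx)⟩

theorem exists_ofReal_eq {z : ℂ} (hz : IsTotallyReal z) : ∃ r : ℝ, (r : ℂ) = z :=
  ⟨z.re, Complex.ext rfl (hz.2 z (minpoly.aeval ℚ z)).symm⟩

end IsTotallyReal

theorem isTotallyReal_coe_iff_mem_maximalRealSubfield (a : algebraicClosure ℚ ℂ) :
    IsTotallyReal a ↔ a ∈ maximalRealSubfield (algebraicClosure ℚ ℂ) := by
  rw [mem_maximalRealSubfield_iff]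
  constructor
  · intro ha φ
    have hroot : aeval (φ a) (minpoly ℚ (a : ℂ)) = 0 :=
      aeval_minpoly_coe_eq_zero_iff.mpr ⟨φ.toRatAlgHom, rfl⟩
    exact Complex.conj_eq_iff_im.mpr (ha.2 _ hroot)
  · refine fun ha => ⟨mem_algebraicClosure_iff.mp a.2, fun z hz => ?_⟩
    obtain ⟨φ, rfl⟩ := aeval_minpoly_coe_eq_zero_iff.mp hz
    exact Complex.conj_eq_iff_im.mp (ha φ)

/-- The field of all totally real numbers, which contains `F_{√(1+x²)}`. It is encoded as the image
in `ℂ` of the maximal real subfield of the field of algebraic numbers, so that the field axioms come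
from Mathlib. -/
noncomputable def totallyRealSubfield : Subfield ℂ :=
  (maximalRealSubfield (algebraicClosure ℚ ℂ)).map (algebraMap (algebraicClosure ℚ ℂ) ℂ)

theorem mem_totallyRealSubfield {z : ℂ} : z ∈ totallyRealSubfield ↔ IsTotallyReal z := by
  constructor
  · rintro ⟨a, ha, rfl⟩
    exact (isTotallyReal_coe_iff_mem_maximalRealSubfield a).mpr ha
  · intro hz
    lift z to algebraicClosure ℚ ℂ using mem_algebraicClosure_iff.mpr hz.1
    exact ⟨z, (isTotallyReal_coe_iff_mem_maximalRealSubfield z).mp hz, rfl⟩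

theorem IsTotallyReal.of_sq_eq_add_sq {x y z : ℂ} (hx : IsTotallyReal x) (hy : IsTotallyReal y)
    (h : z ^ 2 = x ^ 2 + y ^ 2) : IsTotallyReal z := by
  have hz : IsAlgebraic ℚ z := .of_pow two_pos (h ▸ (hx.1.pow 2).add (hy.1.pow 2))
  lift x to algebraicClosure ℚ ℂ using mem_algebraicClosure_iff.mpr hx.1
  lift y to algebraicClosure ℚ ℂ using mem_algebraicClosure_iff.mpr hy.1
  lift z to algebraicClosure ℚ ℂ using mem_algebraicClosure_iff.mpr hz
  rw [isTotallyReal_coe_iff_mem_maximalRealSubfield] at hx hy ⊢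
  exact mem_maximalRealSubfield_of_sq_eq_add_sq hx hy (by exact_mod_cast h)

theorem MemFSqrtOneAddSq.isTotallyReal {α : ℝ} (hα : MemFSqrtOneAddSq α) :
    IsTotallyReal (α : ℂ) := by
  refine mem_totallyRealSubfield.mp
    (hα (totallyRealSubfield.comap Complex.ofRealHom) fun x hx => ?_)
  have hone : IsTotallyReal 1 := mem_totallyRealSubfield.mp (one_mem _)
  refine mem_totallyRealSubfield.mpr (hone.of_sq_eq_add_sq (mem_totallyRealSubfield.mp hx) ?_)
  have hsq : √(1 + x ^ 2) ^ 2 = 1 ^ 2 + x ^ 2 := by rw [Real.sq_sqrt (by positivity), one_pow]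
  simpa only [map_add, map_pow, map_one] using congrArg Complex.ofRealHom hsq

theorem not_isTotallyReal_of_sq_sub_sq_eq {a b : ℚ} (hb : ¬IsSquare b) (hab : a ^ 2 < b) {z : ℂ}
    (hz : (z ^ 2 - a) ^ 2 = b) : ¬IsTotallyReal z := by
  intro hreal
  have hconj : IsConjRoot ℚ (aeval z (X ^ 2 - C a)) (-(z ^ 2 - a)) := by
    simpa using isConjRoot_neg_of_sq_eq_algebraMap hb hz
  obtain ⟨z', hzz', hz'⟩ := exists_isConjRoot_aeval_eq _ hreal.1 hconj
  obtain ⟨s, rfl⟩ := hreal.exists_ofReal_eq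
  obtain ⟨t, rfl⟩ := (hreal.of_isConjRoot hzz').exists_ofReal_eq
  have hs : (s ^ 2 - a) ^ 2 = b := by exact_mod_cast hz
  have ht : t ^ 2 - a = -(s ^ 2 - a) := by
    simp only [map_sub, map_pow, aeval_X, aeval_C, eq_ratCast] at hz'
    exact_mod_cast hz'
  -- `(s t)²` is the norm `(a + w)(a - w)` of `a + w`, where `w = s² - a` is a square root of `b`.
  have hst : (s * t) ^ 2 = a ^ 2 - b := by linear_combination s ^ 2 * ht - hs
  have hab' : (a : ℝ) ^ 2 < b := by exact_mod_cast hab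
  linarith [sq_nonneg (s * t)]

end TotallyReal

namespace MemFSqrt

theorem natCast (n : ℕ) : MemFSqrt n := fun L _ => natCast_mem L n

theorem add {z w : ℂ} (hz : MemFSqrt z) (hw : MemFSqrt w) : MemFSqrt (z + w) :=
  fun L hL => add_mem (hz L hL) (hw L hL)

theorem of_sq {z : ℂ} (hz : MemFSqrt (z ^ 2)) : MemFSqrt z :=
  fun L hL => hL z (hz L hL)

end MemFSqrt

theorem memFSqrtOneAddSq_lt_memFSqrt :
    ∃ α : ℝ, MemFSqrt (α : ℂ) ∧ ¬ MemFSqrtOneAddSq α := by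
  have hsqrt_two : (√2 : ℂ) ^ 2 = (2 : ℕ) := by
    exact_mod_cast Real.sq_sqrt (zero_le_two (α := ℝ))
  have hsqrt : (√(1 + √2) : ℂ) ^ 2 = (1 : ℕ) + √2 := by
    exact_mod_cast Real.sq_sqrt (show 0 ≤ 1 + √2 by positivity)
  refine ⟨√(1 + √2), ?_, fun hmem => ?_⟩
  · have hmem_sqrt_two : MemFSqrt √2 := .of_sq (hsqrt_two ▸ .natCast 2)
    exact .of_sq (hsqrt ▸ (MemFSqrt.natCast 1).add hmem_sqrt_two)
  · have hquartic : ((√(1 + √2) : ℂ) ^ 2 - (1 : ℚ)) ^ 2 = (2 : ℚ) := by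
      rw [hsqrt, Nat.cast_one, Rat.cast_one, add_sub_cancel_left, hsqrt_two]
      norm_num
    exact not_isTotallyReal_of_sq_sub_sq_eq (by norm_num) (by norm_num) hquartic hmem.isTotallyReal
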